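/- Let u ∈ L¹(Q_T) be a nonnegative subsolution of ∂_t u − Δu + g(u) = 0 in Q_T such that g∘u ∈ L¹(Q_T). Then there exist a relatively closed set S ⊂ Ω and a positive Radon measure ν on the open set R := Ω ∖ S such that: (i) for every φ ∈ C_c(R), ess lim_{t→0} ∫_Ω u(·,t) φ dx = ∫_R φ dν, and (ii) for every nonnegative φ ∈ C_c(Ω) with φ > 0 somewhere on S, ess lim_{t→0} ∫_Ω u(·,t) φ dx = +∞. In other words, the initial trace of u is the positive outer regular Borel measure associated with the pair (S, ν). -/

import Mathlib

open MeasureTheory Set Filter Topology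
open scoped ENNReal NNReal

noncomputable section

/-- Euclidean space `ℝ^N`. -/
abbrev Euc (N : ℕ) : Type := EuclideanSpace ℝ (Fin N)

/-- `ρ(x) = dist(x, ∂Ω)`, realized as the distance from `x` to the complement of `Ω`. -/
def rho {N : ℕ} (Ω : Set (Euc N)) (x : Euc N) : ℝ := Metric.infDist x Ωᶜ

/-- The Laplacian (in the space variable) of `f : ℝ^N → ℝ`. -/
def lap {N : ℕ} (f : Euc N → ℝ) (x : Euc N) : ℝ :=
  ∑ i : Fin N, fderiv ℝ (fun y => fderiv ℝ f y (EuclideanSpace.single i 1)) x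
    (EuclideanSpace.single i 1)

/-- The parabolic cylinder `Q_T = Ω × (0,T)`. -/
def QT {N : ℕ} (Ω : Set (Euc N)) (T : ℝ) : Set (Euc N × ℝ) := Ω ×ˢ Ioo 0 T

/-- `∂_t ζ + Δ ζ` for a function `ζ(x,t)` (curried). -/
def heatAdj {N : ℕ} (ζ : Euc N → ℝ → ℝ) (p : Euc N × ℝ) : ℝ :=
  deriv (ζ p.1) p.2 + lap (fun y => ζ y p.2) p.1

/-- `C^{2,1}` regularity: `ζ`, `∂_t ζ`, `∇_x ζ` and `D²_x ζ` exist and are continuous. -/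
def C21 {N : ℕ} (ζ : Euc N → ℝ → ℝ) : Prop :=
  Continuous (fun p : Euc N × ℝ => ζ p.1 p.2) ∧
  (∀ (x : Euc N) (t : ℝ), DifferentiableAt ℝ (ζ x) t) ∧
  Continuous (fun p : Euc N × ℝ => deriv (ζ p.1) p.2) ∧
  (∀ (t : ℝ) (x : Euc N), DifferentiableAt ℝ (fun y => ζ y t) x) ∧
  Continuous (fun p : Euc N × ℝ => fderiv ℝ (fun y => ζ y p.2) p.1) ∧
  (∀ (t : ℝ) (x : Euc N), DifferentiableAt ℝ (fun y => fderiv ℝ (fun z => ζ z t) y) x) ∧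
  Continuous (fun p : Euc N × ℝ => fderiv ℝ (fun y => fderiv ℝ (fun z => ζ z p.2) y) p.1)

/-- Membership in `C^{2,1}_{ℓ,0}(Q̄_T)` : `C^{2,1}` regularity together with
vanishing on `∂Ω × [0,T] ∪ Ω̄ × {T}`. -/
def TestZero {N : ℕ} (Ω : Set (Euc N)) (T : ℝ) (ζ : Euc N → ℝ → ℝ) : Prop :=
  C21 ζ ∧ (∀ x ∈ frontier Ω, ∀ t ∈ Icc (0:ℝ) T, ζ x t = 0) ∧
  (∀ x ∈ closure Ω, ζ x T = 0)

/-- `g : ℝ → ℝ` continuous, nondecreasing and vanishing on `(-∞,0]`. -/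
def GoodG (g : ℝ → ℝ) : Prop := Continuous g ∧ Monotone g ∧ ∀ r : ℝ, r ≤ 0 → g r = 0

/-- `μ ∈ M¹₊(Ω)` : a positive Radon measure on `Ω` with `∫_Ω ρ dμ < ∞`. -/
def MemM1 {N : ℕ} (Ω : Set (Euc N)) (μ : Measure (Euc N)) : Prop :=
  μ Ωᶜ = 0 ∧ (∀ K : Set (Euc N), K ⊆ Ω → IsCompact K → μ K < ⊤) ∧
  (∫⁻ x, ENNReal.ofReal (rho Ω x) ∂μ) < ⊤

/-- A positive Radon measure on the (open) set `U`. -/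
def RadonOn {N : ℕ} (U : Set (Euc N)) (ν : Measure (Euc N)) : Prop :=
  ν Uᶜ = 0 ∧ ∀ K : Set (Euc N), K ⊆ U → IsCompact K → ν K < ⊤

/-- Weak solution of `(P_μ)` : `∂_t u - Δu + g(u) = 0` in `Q_T`, `u = 0` on
`∂Ω × (0,T)`, `u(·,0) = μ`. -/
def WeakSol {N : ℕ} (Ω : Set (Euc N)) (T : ℝ) (g : ℝ → ℝ) (μ : Measure (Euc N))
    (u : Euc N × ℝ → ℝ) : Prop :=
  IntegrableOn u (QT Ω T) ∧
  IntegrableOn (fun p => g (u p) * rho Ω p.1) (QT Ω T) ∧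
  ∀ ζ : Euc N → ℝ → ℝ, TestZero Ω T ζ →
    (∫ p in QT Ω T,
      (-(u p) * deriv (ζ p.1) p.2 - u p * lap (fun y => ζ y p.2) p.1 + ζ p.1 p.2 * g (u p)))
      = ∫ x, ζ x 0 ∂μ

/-- Weak subsolution of `(P_μ)`. -/
def WeakSubSol {N : ℕ} (Ω : Set (Euc N)) (T : ℝ) (g : ℝ → ℝ) (μ : Measure (Euc N))
    (u : Euc N × ℝ → ℝ) : Prop :=
  IntegrableOn u (QT Ω T) ∧
  IntegrableOn (fun p => g (u p) * rho Ω p.1) (QT Ω T) ∧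
  ∀ ζ : Euc N → ℝ → ℝ, TestZero Ω T ζ → (∀ x t, 0 ≤ ζ x t) →
    (∫ p in QT Ω T,
      (-(u p) * deriv (ζ p.1) p.2 - u p * lap (fun y => ζ y p.2) p.1 + ζ p.1 p.2 * g (u p)))
      ≤ ∫ x, ζ x 0 ∂μ

/-- `μ` is a good measure relative to `g` : `(P_μ)` admits a weak solution. -/
def GoodMeasure {N : ℕ} (Ω : Set (Euc N)) (T : ℝ) (g : ℝ → ℝ) (μ : Measure (Euc N)) : Prop :=
  ∃ u, WeakSol Ω T g μ u

/-- Essential limit of `F(t)` as `t → 0⁺` equals `L`. -/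
def EssLimInit (F : ℝ → ℝ) (L : ℝ) : Prop :=
  Tendsto F ((𝓝[>] (0:ℝ)) ⊓ (ae (volume : Measure ℝ))) (𝓝 L)

/-- Essential limit of `F(t)` as `t → 0⁺` is `+∞`. -/
def EssLimInitTop (F : ℝ → ℝ) : Prop :=
  Tendsto F ((𝓝[>] (0:ℝ)) ⊓ (ae (volume : Measure ℝ))) atTop

/-- `ν` is the initial trace of `u` on `U ⊆ Ω` : for every `φ ∈ C_c(U)`,
`ess lim_{t→0} ∫_Ω u(·,t) φ dx = ∫ φ dν`. -/
def InitTraceOn {N : ℕ} (Ω U : Set (Euc N)) (u : Euc N × ℝ → ℝ) (ν : Measure (Euc N)) : Prop :=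
  ∀ φ : Euc N → ℝ, Continuous φ → HasCompactSupport φ → tsupport φ ⊆ U →
    EssLimInit (fun t => ∫ x in Ω, u (x, t) * φ x) (∫ x, φ x ∂ν)

/-- `μstar` is the reduced measure of `μ` : the largest good measure `≤ μ`. -/
def IsReducedMeasure {N : ℕ} (Ω : Set (Euc N)) (T : ℝ) (g : ℝ → ℝ)
    (μ μstar : Measure (Euc N)) : Prop :=
  MemM1 Ω μstar ∧ μstar ≤ μ ∧ GoodMeasure Ω T g μstar ∧
  ∀ ν : Measure (Euc N), MemM1 Ω ν → GoodMeasure Ω T g ν → ν ≤ μ → ν ≤ μstar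

/-- The `N`-dimensional Hausdorff measure on `ℝ^N`. -/
def hausN {N : ℕ} : Measure (Euc N) := MeasureTheory.Measure.hausdorffMeasure (N : ℝ)

open scoped ContDiff Convolution

theorem oneD_antitone {T : ℝ} (G : ℝ → ℝ) (hG : IntegrableOn G (Ioo 0 T))
    (h : ∀ η : ℝ → ℝ, ContDiff ℝ ∞ η → HasCompactSupport η → tsupport η ⊆ Ioo 0 T →
      (∀ t, 0 ≤ η t) → 0 ≤ ∫ t in Ioo 0 T, G t * deriv η t) :
    ∃ A ∈ ae (volume : Measure ℝ), AntitoneOn G (A ∩ Ioo 0 T) := by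
  set G0 : ℝ → ℝ := (Ioo 0 T).indicator G with hG0
  have hGi : Integrable G0 := (integrable_indicator_iff measurableSet_Ioo).2 hG
  let φ : ℕ → ContDiffBump (0:ℝ) := fun i =>
    ⟨1/((i:ℝ)+1), 2*(1/((i:ℝ)+1)), by positivity, by
      have : 0 < 1/((i:ℝ)+1) := by positivity
      linarith⟩
  have hφ : Tendsto (fun i ↦ (φ i).rOut) atTop (𝓝 0) := by
    have := (tendsto_one_div_add_atTop_nhds_zero_nat (𝕜 := ℝ)).const_mul 2
    simpa [φ] using this
  have hc := ContDiffBump.ae_convolution_tendsto_right_of_locallyIntegrable (K := 2) hφ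
    (Eventually.of_forall fun i => le_rfl) hGi.locallyIntegrable
  refine ⟨_, hc, ?_⟩
  rintro s ⟨hs, hsT⟩ t ⟨ht, htT⟩ hst
  rw [mem_ofPred_eq] at hs ht
  have e1 : G0 s = G s := indicator_of_mem hsT _
  have e2 : G0 t = G t := indicator_of_mem htT _
  rw [← e1, ← e2]
  refine le_of_tendsto_of_tendsto ht hs ?_
  have hev : ∀ᶠ i in atTop, (φ i).rOut < min s (T - t) :=
    hφ.eventually_lt_const (lt_min hsT.1 (by linarith [htT.2]))
  filter_upwards [hev] with i hi
  set ρ : ℝ → ℝ := (φ i).normed volume with hρ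
  have hρs : ContDiff ℝ ∞ ρ := (φ i).contDiff_normed
  have hρc : HasCompactSupport ρ := (φ i).hasCompactSupport_normed
  have hd := fun x => hρc.hasDerivAt_convolution_left (ContinuousLinearMap.lsmul ℝ ℝ)
    (hρs.of_le (by simp)) hGi.locallyIntegrable x
  have hanti : AntitoneOn (ρ ⋆[ContinuousLinearMap.lsmul ℝ ℝ, volume] G0) (Icc s t) := by
    refine antitoneOn_of_deriv_nonpos (convex_Icc _ _)
      (fun x _ => (hd x).continuousAt.continuousWithinAt)
      (fun x _ => (hd x).differentiableAt.differentiableWithinAt) ?_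
    intro x hx
    rw [interior_Icc] at hx
    rw [(hd x).deriv, convolution_eq_swap]
    have h1 := h (fun r => ρ (x - r)) (by fun_prop)
      (hρc.comp_homeomorph (Homeomorph.subLeft x)) ?_ (fun r => (φ i).nonneg_normed _)
    · rw [← integral_indicator measurableSet_Ioo] at h1
      have h2 : (fun r => (Ioo 0 T).indicator (fun r => G r * deriv (fun r => ρ (x - r)) r) r)
          = fun r => - ((ContinuousLinearMap.lsmul ℝ ℝ) (deriv ρ (x - r)) (G0 r)) := by
        funext r
        have hdr : deriv (fun r => ρ (x - r)) r = - deriv ρ (x - r) := deriv_comp_const_sub ..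
        simp only [indicator_apply]
        rw [hdr]
        by_cases hr : r ∈ Ioo 0 T
        · simp [hG0, hr, mul_comm]
        · simp [hG0, hr]
      rw [h2, integral_neg] at h1
      linarith
    · have : tsupport (fun r => ρ (x - r)) ⊆ Metric.closedBall x (φ i).rOut := by
        refine closure_minimal ?_ Metric.isClosed_closedBall
        intro r hr
        have : x - r ∈ Function.support ρ := hr
        rw [hρ, (φ i).support_normed_eq] at this
        rw [Metric.mem_ball, dist_zero_right, Real.norm_eq_abs] at this
        rw [Metric.mem_closedBall, dist_comm, Real.dist_eq]
        exact this.le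
      refine this.trans ?_
      rw [Real.closedBall_eq_Icc]
      have := lt_min_iff.1 hi
      intro y hy
      exact ⟨by linarith [hy.1, hx.1], by linarith [hy.2, hx.2]⟩
  exact hanti (left_mem_Icc.2 hst) (right_mem_Icc.2 hst) hst

theorem l_neBot : ((𝓝[>] (0:ℝ)) ⊓ (ae (volume : Measure ℝ))).NeBot := by
  rw [Filter.inf_neBot_iff]
  intro s hs s' hs'
  obtain ⟨d, hd, hsub⟩ := mem_nhdsGT_iff_exists_Ioo_subset.1 hs
  by_contra hne
  rw [not_nonempty_iff_eq_empty] at hne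
  have : Ioo 0 d ⊆ s'ᶜ := fun x hx hx' => by
    have : x ∈ s ∩ s' := ⟨hsub hx, hx'⟩
    simp [hne] at this
  have h0 := measure_mono_null this (mem_ae_iff.1 hs')
  simp at h0
  exact absurd hd (not_lt.2 h0)

theorem oneD_lim {T : ℝ} (hT : 0 < T) (F H : ℝ → ℝ) (hF : IntegrableOn F (Ioo 0 T))
    (hH : IntegrableOn H (Ioo 0 T))
    (h : ∀ η : ℝ → ℝ, ContDiff ℝ ∞ η → HasCompactSupport η → tsupport η ⊆ Ioo 0 T →
      (∀ t, 0 ≤ η t) → 0 ≤ ∫ t in Ioo 0 T, (F t * deriv η t + H t * η t)) :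
    (∃ L, Tendsto F ((𝓝[>] (0:ℝ)) ⊓ (ae (volume : Measure ℝ))) (𝓝 L)) ∨
      Tendsto F ((𝓝[>] (0:ℝ)) ⊓ (ae (volume : Measure ℝ))) atTop := by
  have hHi : IntervalIntegrable H volume 0 T := by
    rw [intervalIntegrable_iff_integrableOn_Ioo_of_le hT.le]; exact hH
  set P : ℝ → ℝ := fun t => ∫ r in (0:ℝ)..t, H r with hP
  have hPac : AbsolutelyContinuousOnInterval P 0 T :=
    hHi.absolutelyContinuousOnInterval_intervalIntegral (by simp)
  have hPc : ContinuousOn P (Icc 0 T) := by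
    have := hPac.continuousOn
    rwa [uIcc_of_le hT.le] at this
  have hPd : ∀ᵐ t, t ∈ Ioo 0 T → deriv P t = H t := by
    have := hHi.ae_hasDerivAt_integral
    filter_upwards [this] with t ht htT
    rw [uIcc_of_le hT.le] at ht
    exact (ht ⟨htT.1.le, htT.2.le⟩ 0 (by simp [hT.le])).deriv
  have hPint : IntegrableOn P (Ioo 0 T) :=
    (hPc.integrableOn_Icc).mono_set Ioo_subset_Icc_self
  obtain ⟨A, hA, hanti⟩ := oneD_antitone (T := T) (fun t => F t - P t) (hF.sub hPint) (by
    intro η hη hηc hηs hη0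
    have hb : ∀ {f : ℝ → ℝ}, IntegrableOn f (Ioo 0 T) → ∀ {e : ℝ → ℝ}, Continuous e →
        HasCompactSupport e → IntegrableOn (fun t => f t * e t) (Ioo 0 T) := by
      intro f hf e he hec
      obtain ⟨C, hC⟩ := hec.exists_bound_of_continuous he
      exact hf.mul_bdd (c := C) he.aestronglyMeasurable (Eventually.of_forall hC)
    have hη' : Continuous (deriv η) := hη.continuous_deriv (by simp)
    have hηac : AbsolutelyContinuousOnInterval η 0 T :=
      (hη.of_le (by simp) : ContDiff ℝ 1 η).contDiffOn.absolutelyContinuousOnInterval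
    have h0 : η 0 = 0 := image_eq_zero_of_notMem_tsupport fun hh => lt_irrefl _ (hηs hh).1
    have hT0 : η T = 0 := image_eq_zero_of_notMem_tsupport fun hh => lt_irrefl _ (hηs hh).2
    have ibp := hPac.integral_mul_deriv_eq_deriv_mul hηac
    rw [h0, hT0, intervalIntegral.integral_of_le hT.le, intervalIntegral.integral_of_le hT.le,
      integral_Ioc_eq_integral_Ioo, integral_Ioc_eq_integral_Ioo] at ibp
    have e : ∫ t in Ioo 0 T, deriv P t * η t = ∫ t in Ioo 0 T, H t * η t := by
      apply setIntegral_congr_ae measurableSet_Ioo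
      filter_upwards [hPd] with t ht htT
      rw [ht htT]
    rw [e] at ibp
    have hh := h η hη hηc hηs hη0
    rw [integral_add (hb hF hη' hηc.deriv) (hb hH hη.continuous hηc)] at hh
    have : ∫ t in Ioo 0 T, (F t - P t) * deriv η t
      = (∫ t in Ioo 0 T, F t * deriv η t) - ∫ t in Ioo 0 T, P t * deriv η t := by
      rw [← integral_sub (hb hF hη' hηc.deriv) (hb hPint hη' hηc.deriv)]
      simp only [sub_mul]
    rw [this, ibp]
    linarith)
  set l := (𝓝[>] (0:ℝ)) ⊓ (ae (volume : Measure ℝ)) with hl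
  have hPl : Tendsto P l (𝓝 0) := by
    have h1 : Tendsto P (𝓝[Icc 0 T] 0) (𝓝 (P 0)) := hPc 0 (by simp [hT.le])
    have h2 : P 0 = 0 := by simp [hP]
    rw [h2] at h1
    refine h1.mono_left (inf_le_left.trans ?_)
    rw [← nhdsWithin_Ioc_eq_nhdsGT hT]
    exact nhdsWithin_mono _ Ioc_subset_Icc_self
  have hmem : ∀ s ∈ Ioo 0 T, ∀ᶠ t in l, t ∈ A ∩ Ioo 0 T ∧ t ≤ s := by
    intro s hs
    have h1 : ∀ᶠ t in l, t ∈ A := Filter.mem_inf_of_right hA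
    have h2 : ∀ᶠ t in l, t ∈ Ioc 0 s := Filter.mem_inf_of_left (Ioc_mem_nhdsGT hs.1)
    filter_upwards [h1, h2] with t h1 h2
    exact ⟨⟨h1, h2.1, h2.2.trans_lt hs.2⟩, h2.2⟩
  have hmem0 : ∀ᶠ t in l, t ∈ A ∩ Ioo 0 T :=
    (hmem (T/2) ⟨by linarith, by linarith⟩).mono fun t h => h.1
  have := l_neBot
  have hne : (A ∩ Ioo 0 T).Nonempty := hmem0.exists
  have hFe : F = fun t => (F t - P t) + P t := by funext t; ring
  by_cases hbd : BddAbove ((fun t => F t - P t) '' (A ∩ Ioo 0 T))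
  · left
    have hlim : Tendsto (fun t => F t - P t) l (𝓝 (sSup ((fun t => F t - P t) '' (A ∩ Ioo 0 T)))) := ?_
    · refine ⟨_, (hlim.add hPl).congr fun t => ?_⟩
      ring
    rw [tendsto_order]
    constructor
    · intro a ha
      obtain ⟨_, ⟨s, hs, rfl⟩, has⟩ := exists_lt_of_lt_csSup (hne.image _) ha
      filter_upwards [hmem s hs.2] with t ht
      exact has.trans_le (hanti ht.1 hs ht.2)
    · intro a ha
      filter_upwards [hmem0] with t ht
      exact (le_csSup hbd ⟨t, ht, rfl⟩).trans_lt ha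
  · right
    rw [hFe]
    refine Filter.Tendsto.atTop_add (C := 0) ?_ hPl
    rw [tendsto_atTop]
    intro b
    rw [not_bddAbove_iff] at hbd
    obtain ⟨_, ⟨s, hs, rfl⟩, has⟩ := hbd b
    filter_upwards [hmem s hs.2] with t ht
    exact has.le.trans (hanti ht.1 hs ht.2)

theorem cd_fderiv {N : ℕ} {φ : Euc N → ℝ} (hφ : ContDiff ℝ ∞ φ) : ContDiff ℝ 1 (fderiv ℝ φ) :=
  (contDiff_infty_iff_fderiv.1 hφ).2.of_le (by simp)

theorem lap_mul_const {N : ℕ} {φ : Euc N → ℝ} (hφ : ContDiff ℝ ∞ φ) (c : ℝ) (x : Euc N) :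
    lap (fun y => φ y * c) x = c * lap φ x := by
  unfold lap
  rw [Finset.mul_sum]
  refine Finset.sum_congr rfl fun i _ => ?_
  have h1 : ∀ y, fderiv ℝ (fun y => φ y * c) y = c • fderiv ℝ φ y := fun y =>
    fderiv_mul_const (hφ.differentiable (by simp) y) c
  have h2 : Differentiable ℝ (fun y => fderiv ℝ φ y (EuclideanSpace.single i 1)) :=
    ((cd_fderiv hφ).differentiable (by simp)).clm_apply (by fun_prop)
  simp only [h1, smul_apply, smul_eq_mul]
  rw [fderiv_const_mul (h2 x)]
  simp

theorem lap_cont {N : ℕ} {φ : Euc N → ℝ} (hφ : ContDiff ℝ ∞ φ) : Continuous (lap φ) := by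
  unfold lap
  refine continuous_finsetSum _ fun i _ => ?_
  have h1 : ContDiff ℝ 1 (fun y => fderiv ℝ φ y (EuclideanSpace.single i 1)) :=
    (cd_fderiv hφ).clm_apply contDiff_const
  exact (h1.continuous_fderiv (by simp)).clm_apply continuous_const

theorem lap_supp {N : ℕ} {φ : Euc N → ℝ} (hφ : HasCompactSupport φ) :
    HasCompactSupport (lap φ) := by
  refine hφ.mono' ?_
  intro x hx
  by_contra hxs
  apply hx
  unfold lap
  refine Finset.sum_eq_zero fun i _ => ?_
  have : (fun y => fderiv ℝ φ y (EuclideanSpace.single i 1)) =ᶠ[𝓝 x] fun _ => 0 := by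
    have h0 : φ =ᶠ[𝓝 x] 0 := notMem_tsupport_iff_eventuallyEq.1 hxs
    filter_upwards [h0.fderiv (𝕜 := ℝ)] with y hy
    rw [hy]; simp
  rw [this.fderiv_eq]; simp

theorem C21_prod {N : ℕ} {φ : Euc N → ℝ} (hφ : ContDiff ℝ ∞ φ) {η : ℝ → ℝ}
    (hη : ContDiff ℝ ∞ η) : C21 (fun x t => φ x * η t) := by
  have hφd := hφ.differentiable (by simp)
  have hφc := hφ.continuous
  have hηc := hη.continuous
  have hηd := hη.differentiable (by simp)
  have hφ1 : ContDiff ℝ 1 (fderiv ℝ φ) := cd_fderiv hφ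
  have hφ1c := hφ1.continuous
  have hφ1d := hφ1.differentiable (by simp)
  have hφ2c := hφ1.continuous_fderiv (by simp)
  have hη' : Continuous (deriv η) := hη.continuous_deriv (by simp)
  have e1 : ∀ x t, deriv (fun t => φ x * η t) t = φ x * deriv η t := fun x t =>
    deriv_const_mul _ (hηd t)
  have e2 : ∀ t x, fderiv ℝ (fun y => φ y * η t) x = η t • fderiv ℝ φ x := fun t x =>
    fderiv_mul_const (hφd x) _
  have e3 : ∀ t x, fderiv ℝ (fun y => η t • fderiv ℝ φ y) x = η t • fderiv ℝ (fderiv ℝ φ) x :=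
    fun t x => fderiv_fun_const_smul (hφ1d x) _
  unfold C21
  simp only [e1, e2, e3]
  refine ⟨by fun_prop, by fun_prop, by fun_prop, by fun_prop, ?_, by fun_prop, ?_⟩
  · exact (hηc.comp continuous_snd).smul (hφ1c.comp continuous_fst)
  · exact (hηc.comp continuous_snd).smul (hφ2c.comp continuous_fst)

theorem QT_meas {N : ℕ} (Ω : Set (Euc N)) (T : ℝ) :
    (volume : Measure (Euc N × ℝ)).restrict (QT Ω T)
      = ((volume : Measure (Euc N)).restrict Ω).prod ((volume : Measure ℝ).restrict (Ioo 0 T)) := by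
  rw [Measure.prod_restrict]; rfl

theorem fub {N : ℕ} {Ω : Set (Euc N)} {T : ℝ} {u : Euc N × ℝ → ℝ}
    (hu : IntegrableOn u (QT Ω T)) {a : Euc N → ℝ} (ha : Continuous a) (hac : HasCompactSupport a)
    {e : ℝ → ℝ} (he : Continuous e) (hec : HasCompactSupport e) :
    IntegrableOn (fun p => u p * (a p.1 * e p.2)) (QT Ω T) ∧
    IntegrableOn (fun t => ∫ x in Ω, u (x, t) * a x) (Ioo 0 T) ∧
    IntegrableOn (fun t => (∫ x in Ω, u (x, t) * a x) * e t) (Ioo 0 T) ∧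
    ∫ p in QT Ω T, u p * (a p.1 * e p.2) = ∫ t in Ioo 0 T, (∫ x in Ω, u (x, t) * a x) * e t := by
  obtain ⟨C, hC⟩ := hac.exists_bound_of_continuous ha
  obtain ⟨D, hD⟩ := hec.exists_bound_of_continuous he
  have hC0 : 0 ≤ C := (norm_nonneg _).trans (hC 0)
  have i1 : IntegrableOn (fun p => u p * a p.1) (QT Ω T) :=
    hu.mul_bdd (c := C) (ha.comp continuous_fst).aestronglyMeasurable
      (Eventually.of_forall fun p => hC _)
  have i2 : IntegrableOn (fun p => u p * (a p.1 * e p.2)) (QT Ω T) := by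
    have : IntegrableOn (fun p => u p * a p.1 * e p.2) (QT Ω T) :=
      i1.mul_bdd (c := D) (he.comp continuous_snd).aestronglyMeasurable
        (Eventually.of_forall fun p => hD _)
    simpa only [mul_assoc] using this
  have i3 : IntegrableOn (fun t => ∫ x in Ω, u (x, t) * a x) (Ioo 0 T) := by
    unfold IntegrableOn at i1 ⊢
    rw [QT_meas] at i1
    exact i1.integral_prod_right
  refine ⟨i2, i3, i3.mul_bdd (c := D) he.aestronglyMeasurable (Eventually.of_forall hD), ?_⟩
  unfold IntegrableOn at i2
  rw [QT_meas] at i2 ⊢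
  rw [integral_prod_symm _ i2]
  refine integral_congr_ae (Eventually.of_forall fun t => ?_)
  simp only [← mul_assoc]
  exact integral_mul_const _ _

theorem dich {N : ℕ} (Ω : Set (Euc N)) (T : ℝ) (hT : 0 < T) (hΩo : IsOpen Ω)
    (g : ℝ → ℝ) (hg : GoodG g) (u : Euc N × ℝ → ℝ)
    (hu_int : IntegrableOn u (QT Ω T))
    (hgu_int : IntegrableOn (fun p => g (u p)) (QT Ω T))
    (hsub : ∀ ζ : Euc N → ℝ → ℝ, C21 ζ →
      HasCompactSupport (fun p : Euc N × ℝ => ζ p.1 p.2) →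
      tsupport (fun p : Euc N × ℝ => ζ p.1 p.2) ⊆ QT Ω T →
      (∀ x t, 0 ≤ ζ x t) →
      (∫ p in QT Ω T,
        (-(u p) * deriv (ζ p.1) p.2 - u p * lap (fun y => ζ y p.2) p.1 + ζ p.1 p.2 * g (u p)))
        ≤ 0)
    (φ : Euc N → ℝ) (hφ : ContDiff ℝ ∞ φ) (hφc : HasCompactSupport φ) (hφs : tsupport φ ⊆ Ω)
    (hφ0 : ∀ x, 0 ≤ φ x) :
    (∃ L, EssLimInit (fun t => ∫ x in Ω, u (x, t) * φ x) L) ∨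
      EssLimInitTop (fun t => ∫ x in Ω, u (x, t) * φ x) := by
  have hz : HasCompactSupport (fun _ : ℝ => (0:ℝ)) := HasCompactSupport.zero
  have hg0 : ∀ r, 0 ≤ g r := by
    intro r
    rcases le_total r 0 with h | h
    · rw [hg.2.2 r h]
    · rw [← hg.2.2 0 le_rfl]; exact hg.2.1 h
  refine oneD_lim hT _ (fun t => ∫ x in Ω, u (x, t) * lap φ x)
    (fub hu_int hφ.continuous hφc continuous_const hz).2.1
    (fub hu_int (lap_cont hφ) (lap_supp hφc) continuous_const hz).2.1 ?_
  intro η hη hηc hηs hη0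
  have hη' : Continuous (deriv η) := hη.continuous_deriv (by simp)
  obtain ⟨i1, -, i1', e1⟩ := fub hu_int hφ.continuous hφc hη' hηc.deriv
  obtain ⟨i2, -, i2', e2⟩ := fub hu_int (lap_cont hφ) (lap_supp hφc) hη.continuous hηc
  obtain ⟨i3, -, -, -⟩ := fub hgu_int hφ.continuous hφc hη.continuous hηc
  have hts : Function.support (fun p : Euc N × ℝ => φ p.1 * η p.2) ⊆ tsupport φ ×ˢ tsupport η := by
    intro p hp
    exact ⟨subset_tsupport _ (left_ne_zero_of_mul hp), subset_tsupport _ (right_ne_zero_of_mul hp)⟩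
  have hK : IsCompact (tsupport φ ×ˢ tsupport η) := hφc.isCompact.prod hηc.isCompact
  have hs := hsub (fun x t => φ x * η t) (C21_prod hφ hη)
    (HasCompactSupport.of_support_subset_isCompact hK hts)
    ((closure_minimal hts hK.isClosed).trans (prod_mono hφs hηs))
    (fun x t => mul_nonneg (hφ0 x) (hη0 t))
  have ed : ∀ p : Euc N × ℝ, deriv (fun t => φ p.1 * η t) p.2 = φ p.1 * deriv η p.2 := fun p =>
    deriv_const_mul _ (hη.differentiable (by simp) _)
  simp only [ed, lap_mul_const hφ] at hs
  rw [integral_add i1' i2', ← e1, ← e2]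
  have h3 : 0 ≤ ∫ p in QT Ω T, g (u p) * (φ p.1 * η p.2) :=
    integral_nonneg fun p => mul_nonneg (hg0 _) (mul_nonneg (hφ0 _) (hη0 _))
  have : ∫ p in QT Ω T, (-(u p) * (φ p.1 * deriv η p.2) - u p * (η p.2 * lap φ p.1)
      + φ p.1 * η p.2 * g (u p)) = -(∫ p in QT Ω T, u p * (φ p.1 * deriv η p.2))
      - (∫ p in QT Ω T, u p * (lap φ p.1 * η p.2)) + ∫ p in QT Ω T, g (u p) * (φ p.1 * η p.2) := by
    have i1n : IntegrableOn (fun p => -(u p * (φ p.1 * deriv η p.2))) (QT Ω T) := i1.neg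
    have i12 : IntegrableOn (fun p => -(u p * (φ p.1 * deriv η p.2)) - u p * (lap φ p.1 * η p.2))
      (QT Ω T) := i1n.sub i2
    rw [← integral_neg, ← integral_sub i1n i2, ← integral_add i12 i3]
    congr 1
    funext p
    ring
  rw [this] at hs
  linarith

/-- continuous with compact support -/
def CC {N : ℕ} (φ : Euc N → ℝ) : Prop := Continuous φ ∧ HasCompactSupport φ

/-- smooth nonnegative with compact support in `Ω` -/
def Adm {N : ℕ} (Ω : Set (Euc N)) (φ : Euc N → ℝ) : Prop :=
  ContDiff ℝ ∞ φ ∧ HasCompactSupport φ ∧ tsupport φ ⊆ Ω ∧ ∀ x, 0 ≤ φ x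

theorem Adm.cc {N : ℕ} {Ω : Set (Euc N)} {φ : Euc N → ℝ} (h : Adm Ω φ) : CC φ :=
  ⟨h.1.continuous, h.2.1⟩

theorem CC.add {N : ℕ} {φ ψ : Euc N → ℝ} (h : CC φ) (h' : CC ψ) : CC (fun x => φ x + ψ x) :=
  ⟨h.1.add h'.1, h.2.add h'.2⟩

theorem CC.smul {N : ℕ} {φ : Euc N → ℝ} (h : CC φ) (c : ℝ) : CC (fun x => c * φ x) :=
  ⟨continuous_const.mul h.1, h.2.mul_left⟩

/-- the filter for essential limits at `0` -/
abbrev ll : Filter ℝ := (𝓝[>] (0:ℝ)) ⊓ (ae (volume : Measure ℝ))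

/-- the spatial integral -/
def FF {N : ℕ} (Ω : Set (Euc N)) (u : Euc N × ℝ → ℝ) (φ : Euc N → ℝ) (t : ℝ) : ℝ :=
  ∫ x in Ω, u (x, t) * φ x

/-- good times -/
def GoodT {N : ℕ} (Ω : Set (Euc N)) (u : Euc N × ℝ → ℝ) (t : ℝ) : Prop :=
  IntegrableOn (fun x => u (x, t)) Ω ∧ ∀ x ∈ Ω, 0 ≤ u (x, t)

theorem goodT_ev {N : ℕ} {Ω : Set (Euc N)} {T : ℝ} (hT : 0 < T) {u : Euc N × ℝ → ℝ}
    (hu_int : IntegrableOn u (QT Ω T)) (hu_nonneg : ∀ p ∈ QT Ω T, 0 ≤ u p) :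
    ∀ᶠ t in ll, GoodT Ω u t := by
  unfold IntegrableOn at hu_int
  rw [QT_meas] at hu_int
  have h1 := hu_int.prod_left_ae
  rw [ae_restrict_iff' measurableSet_Ioo] at h1
  have h1' : ∀ᶠ t in ll, t ∈ Ioo 0 T → Integrable (fun x => u (x, t)) (volume.restrict Ω) :=
    Filter.mem_inf_of_right h1
  have h2 : ∀ᶠ t in ll, t ∈ Ioo 0 T := Filter.mem_inf_of_left (Ioo_mem_nhdsGT hT)
  filter_upwards [h1', h2] with t h1 h2
  exact ⟨h1 h2, fun x hx => hu_nonneg _ ⟨hx, h2⟩⟩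

section
variable {N : ℕ} {Ω : Set (Euc N)} {u : Euc N × ℝ → ℝ}

theorem GoodT.int {t : ℝ} (h : GoodT Ω u t) {φ : Euc N → ℝ} (hφ : CC φ) :
    IntegrableOn (fun x => u (x, t) * φ x) Ω := by
  obtain ⟨C, hC⟩ := hφ.2.exists_bound_of_continuous hφ.1
  exact h.1.mul_bdd (c := C) hφ.1.aestronglyMeasurable (Eventually.of_forall hC)

theorem GoodT.mono (hΩ : IsOpen Ω) {t : ℝ} (h : GoodT Ω u t) {φ ψ : Euc N → ℝ} (hφ : CC φ)
    (hψ : CC ψ) (hle : ∀ x, φ x ≤ ψ x) : FF Ω u φ t ≤ FF Ω u ψ t :=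
  setIntegral_mono_on (h.int hφ) (h.int hψ) hΩ.measurableSet fun x hx =>
    mul_le_mul_of_nonneg_left (hle x) (h.2 x hx)

theorem GoodT.add {t : ℝ} (h : GoodT Ω u t) {φ ψ : Euc N → ℝ} (hφ : CC φ)
    (hψ : CC ψ) : FF Ω u (fun x => φ x + ψ x) t = FF Ω u φ t + FF Ω u ψ t := by
  unfold FF
  rw [← integral_add (h.int hφ) (h.int hψ)]
  simp only [mul_add]

theorem FF_smul (c : ℝ) (φ : Euc N → ℝ) (t : ℝ) :
    FF Ω u (fun x => c * φ x) t = c * FF Ω u φ t := by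
  unfold FF
  rw [← integral_const_mul]
  congr 1; funext x; ring

/-- the regular set -/
def Reg (Ω : Set (Euc N)) (u : Euc N × ℝ → ℝ) : Set (Euc N) :=
  {x | x ∈ Ω ∧ ∃ ψ, Adm Ω ψ ∧ 0 < ψ x ∧ ∃ M, ∀ᶠ t in ll, FF Ω u ψ t ≤ M}

theorem Reg_open (hΩ : IsOpen Ω) : IsOpen (Reg Ω u) := by
  rw [isOpen_iff_mem_nhds]
  rintro x ⟨hx, ψ, hψ, hpos, hM⟩
  filter_upwards [hΩ.mem_nhds hx, hψ.1.continuous.continuousAt.eventually_const_lt hpos]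
    with y hy hy'
  exact ⟨hy, ψ, hψ, hy', hM⟩

theorem Adm.add {φ ψ : Euc N → ℝ} (h : Adm Ω φ) (h' : Adm Ω ψ) : Adm Ω (fun x => φ x + ψ x) :=
  ⟨h.1.add h'.1, h.2.1.add h'.2.1, (tsupport_add φ ψ).trans (union_subset h.2.2.1 h'.2.2.1),
    fun x => add_nonneg (h.2.2.2 x) (h'.2.2.2 x)⟩

theorem Adm.smul {φ : Euc N → ℝ} (h : Adm Ω φ) {c : ℝ} (hc : 0 ≤ c) : Adm Ω (fun x => c * φ x) :=
  ⟨contDiff_const.mul h.1, h.2.1.mul_left, (tsupport_mul_subset_right).trans h.2.2.1,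
    fun x => mul_nonneg hc (h.2.2.2 x)⟩

theorem Reg_cover (hgt : ∀ᶠ t in ll, GoodT Ω u t) {K : Set (Euc N)} (hK : IsCompact K)
    (hKR : K ⊆ Reg Ω u) :
    ∃ ψ, Adm Ω ψ ∧ (∀ x ∈ K, 1 ≤ ψ x) ∧ ∃ M, ∀ᶠ t in ll, FF Ω u ψ t ≤ M := by
  refine hK.induction_on (p := fun K => ∃ ψ, Adm Ω ψ ∧ (∀ x ∈ K, 1 ≤ ψ x) ∧
    ∃ M, ∀ᶠ t in ll, FF Ω u ψ t ≤ M) ?_ ?_ ?_ ?_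
  · refine ⟨fun _ => 0, ⟨contDiff_const, HasCompactSupport.zero, ?_, fun _ => le_rfl⟩, by simp, 0, ?_⟩
    · simp [tsupport]
    · simp [FF]
  · rintro s t hst ⟨ψ, h1, h2, h3⟩
    exact ⟨ψ, h1, fun x hx => h2 x (hst hx), h3⟩
  · rintro s t ⟨ψ, h1, h2, M, h3⟩ ⟨ψ', h1', h2', M', h3'⟩
    refine ⟨_, h1.add h1', ?_, M + M', ?_⟩
    · rintro x (hx | hx)
      · linarith [h2 x hx, h1'.2.2.2 x]
      · linarith [h2' x hx, h1.2.2.2 x]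
    · filter_upwards [hgt, h3, h3'] with t a b c
      rw [a.add h1.cc h1'.cc]
      exact add_le_add b c
  · intro x hx
    obtain ⟨-, ψ, hψ, hpos, M, hM⟩ := hKR hx
    refine ⟨{y | ψ x / 2 < ψ y}, mem_nhdsWithin_of_mem_nhds
      (hψ.1.continuous.continuousAt.eventually_const_lt (by linarith)), _,
      hψ.smul (c := 2 / ψ x) (by positivity), ?_, 2 / ψ x * M, ?_⟩
    · intro y hy
      have hy' : ψ x / 2 < ψ y := hy
      rw [div_mul_eq_mul_div, le_div_iff₀ hpos]
      linarith
    · filter_upwards [hM] with t ht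
      rw [FF_smul]
      gcongr

theorem fin_lim (hd : ∀ ψ, Adm Ω ψ → (∃ L, Tendsto (FF Ω u ψ) ll (𝓝 L)) ∨
      Tendsto (FF Ω u ψ) ll atTop) {ψ : Euc N → ℝ} (hψ : Adm Ω ψ)
    (hM : ∃ M, ∀ᶠ t in ll, FF Ω u ψ t ≤ M) : ∃ L, Tendsto (FF Ω u ψ) ll (𝓝 L) := by
  rcases hd ψ hψ with h | h
  · exact h
  · exfalso
    obtain ⟨M, hM⟩ := hM
    have : ll.NeBot := l_neBot
    obtain ⟨t, h1, h2⟩ := (hM.and (h.eventually_gt_atTop M)).exists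
    linarith

theorem lim_exists (hΩ : IsOpen Ω) (hgt : ∀ᶠ t in ll, GoodT Ω u t)
    (hd : ∀ ψ, Adm Ω ψ → (∃ L, Tendsto (FF Ω u ψ) ll (𝓝 L)) ∨
      Tendsto (FF Ω u ψ) ll atTop) {φ : Euc N → ℝ} (hφ : CC φ) (hs : tsupport φ ⊆ Reg Ω u) :
    ∃ L, Tendsto (FF Ω u φ) ll (𝓝 L) := by
  have hne : ll.NeBot := l_neBot
  obtain ⟨ψ, hψ, hψ1, M, hM⟩ := Reg_cover hgt hφ.2.isCompact hs
  obtain ⟨L0, hL0⟩ := fin_lim hd hψ ⟨M, hM⟩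
  have hRΩ : Reg Ω u ⊆ Ω := fun x hx => hx.1
  -- smooth functions supported in `tsupport φ`
  have key : ∀ f : Euc N → ℝ, ContDiff ℝ ∞ f → Function.support f ⊆ Function.support φ →
      ∃ L, Tendsto (FF Ω u f) ll (𝓝 L) := by
    intro f hf hfs
    have hfc : HasCompactSupport f := hφ.2.mono hfs
    obtain ⟨C, hC⟩ := hfc.exists_bound_of_continuous hf.continuous
    have hC0 : 0 ≤ C := (norm_nonneg _).trans (hC 0)
    have hfC : ∀ x, |f x| ≤ C * ψ x := by
      intro x
      by_cases hx : x ∈ Function.support f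
      · have := hψ1 x (subset_tsupport _ (hfs hx))
        calc |f x| ≤ C * 1 := by simpa using hC x
          _ ≤ C * ψ x := by gcongr
      · rw [Function.notMem_support.1 hx, abs_zero]
        exact mul_nonneg hC0 (hψ.2.2.2 x)
    have hfcc : CC f := ⟨hf.continuous, hfc⟩
    have hadm : Adm Ω (fun x => f x + C * ψ x) :=
      ⟨hf.add (contDiff_const.mul hψ.1), hfc.add (hψ.cc.smul C).2,
        (tsupport_add f _).trans (union_subset ((closure_mono hfs).trans (hs.trans hRΩ))
          (hψ.smul hC0).2.2.1), fun x => by linarith [abs_le.1 (hfC x)]⟩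
    obtain ⟨L1, hL1⟩ := fin_lim hd hadm ⟨2 * C * M, by
      filter_upwards [hgt, hM] with t ht hMt
      calc _ ≤ FF Ω u (fun x => 2 * C * ψ x) t :=
            ht.mono hΩ hadm.cc (hψ.cc.smul _) fun x => by linarith [abs_le.1 (hfC x)]
        _ = 2 * C * FF Ω u ψ t := FF_smul _ _ _
        _ ≤ 2 * C * M := by gcongr⟩
    refine ⟨L1 - C * L0, (hL1.sub (hL0.const_mul C)).congr' ?_⟩
    filter_upwards [hgt] with t ht
    rw [ht.add hfcc (hψ.cc.smul C), FF_smul]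
    ring
  rw [← cauchy_map_iff_exists_tendsto, Metric.cauchy_iff]
  refine ⟨inferInstance, fun ε hε => ?_⟩
  set M' := max M 0 + 1 with hM'
  have hM'0 : 0 < M' := by positivity
  set δ := ε / (4 * M') with hδ
  have hδ0 : 0 < δ := by positivity
  obtain ⟨f, hf, hfa, hfs⟩ := hφ.1.exists_contDiff_approx ⊤ (ε := fun _ => δ) continuous_const
    (fun _ => hδ0)
  obtain ⟨L, hL⟩ := key f hf hfs
  have hfcc : CC f := ⟨hf.continuous, hφ.2.mono hfs⟩
  have hclose : ∀ x, |f x - φ x| ≤ δ * ψ x := by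
    intro x
    by_cases hx : x ∈ Function.support φ
    · have := hψ1 x (subset_tsupport _ hx)
      calc |f x - φ x| ≤ δ * 1 := by simpa [Real.dist_eq] using (hfa x).le
        _ ≤ δ * ψ x := by gcongr
    · rw [Function.notMem_support.1 hx, Function.notMem_support.1 fun h => hx (hfs h)]
      simpa using mul_nonneg hδ0.le (hψ.2.2.2 x)
  have hev : ∀ᶠ t in ll, |FF Ω u φ t - L| < ε / 2 := by
    have hL' : ∀ᶠ t in ll, |FF Ω u f t - L| < ε / 4 := by
      have := Metric.tendsto_nhds.1 hL (ε / 4) (by positivity)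
      simpa [Real.dist_eq] using this
    filter_upwards [hgt, hM, hL'] with t ht hMt hLt
    have a1 : FF Ω u f t ≤ FF Ω u φ t + δ * FF Ω u ψ t := by
      rw [← FF_smul, ← ht.add hφ (hψ.cc.smul _)]
      exact ht.mono hΩ hfcc (hφ.add (hψ.cc.smul _)) fun x => by linarith [abs_le.1 (hclose x)]
    have a2 : FF Ω u φ t ≤ FF Ω u f t + δ * FF Ω u ψ t := by
      rw [← FF_smul, ← ht.add hfcc (hψ.cc.smul _)]
      exact ht.mono hΩ hφ (hfcc.add (hψ.cc.smul _)) fun x => by linarith [abs_le.1 (hclose x)]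
    have a3 : δ * FF Ω u ψ t ≤ ε / 4 := by
      calc δ * FF Ω u ψ t ≤ δ * M' := by
            gcongr
            exact hMt.trans ((le_max_left _ _).trans (by linarith))
        _ = ε / 4 := by rw [hδ]; field_simp
    rw [abs_lt] at hLt ⊢
    constructor <;> linarith
  refine ⟨_, image_mem_map hev, ?_⟩
  rintro _ ⟨s, hs, rfl⟩ _ ⟨t, ht, rfl⟩
  have hs' : |FF Ω u φ s - L| < ε / 2 := hs
  have ht' : |FF Ω u φ t - L| < ε / 2 := ht
  rw [Real.dist_eq]
  rw [abs_lt] at hs' ht' ⊢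
  constructor <;> linarith

open CompactlySupported in
theorem riesz_part (hΩ : IsOpen Ω) (hgt : ∀ᶠ t in ll, GoodT Ω u t) (R : Set (Euc N))
    (hR : IsOpen R)
    (hlim : ∀ φ : Euc N → ℝ, CC φ → tsupport φ ⊆ R → ∃ L, Tendsto (FF Ω u φ) ll (𝓝 L)) :
    ∃ ν : Measure (Euc N), RadonOn R ν ∧ InitTraceOn Ω R u ν := by
  have hne : ll.NeBot := l_neBot
  have hlc : LocallyCompactSpace R := hR.locallyCompactSpace
  let ex : C_c(R, ℝ) → Euc N → ℝ := fun f => Function.extend Subtype.val f 0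
  have exval : ∀ (f : C_c(R, ℝ)) (x : R), ex f x = f x := fun f x =>
    Subtype.val_injective.extend_apply _ _ _
  have exout : ∀ (f : C_c(R, ℝ)) (x : Euc N), x ∉ R → ex f x = 0 := fun f x hx =>
    Function.extend_apply' _ _ _ (by rintro ⟨a, rfl⟩; exact hx a.2)
  have excc : ∀ f, CC (ex f) := fun f =>
    ⟨HasCompactSupport.continuous_extend_zero hR f.continuous f.hasCompactSupport,
      f.hasCompactSupport.extend_zero continuous_subtype_val⟩
  have exs : ∀ f, tsupport (ex f) ⊆ R := fun f =>
    (f.hasCompactSupport.tsupport_extend_zero_subset continuous_subtype_val).trans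
      (Subtype.coe_image_subset _ _)
  choose Lf hLf using fun f => hlim (ex f) (excc f) (exs f)
  let Λ0 : C_c(R, ℝ) →ₗ[ℝ] ℝ :=
    { toFun := Lf
      map_add' := by
        intro f f'
        refine tendsto_nhds_unique (hLf _) (((hLf f).add (hLf f')).congr' ?_)
        filter_upwards [hgt] with t ht
        rw [← ht.add (excc f) (excc f')]
        congr 1
        funext x
        by_cases hx : x ∈ R
        · have h1 := exval f ⟨x, hx⟩
          have h2 := exval f' ⟨x, hx⟩
          have h3 := exval (f + f') ⟨x, hx⟩
          simp only at h1 h2 h3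
          rw [h1, h2, h3]; rfl
        · simp [exout _ x hx]
      map_smul' := by
        intro c f
        refine tendsto_nhds_unique (hLf _) (((hLf f).const_mul c).congr' ?_)
        filter_upwards with t
        rw [← FF_smul]
        congr 1
        funext x
        by_cases hx : x ∈ R
        · have h1 := exval f ⟨x, hx⟩
          have h3 := exval (c • f) ⟨x, hx⟩
          simp only at h1 h3
          rw [h1, h3]; rfl
        · simp [exout _ x hx] }
  have hpos : ∀ f : C_c(R, ℝ), 0 ≤ f → 0 ≤ Λ0 f := by
    intro f hf
    refine ge_of_tendsto (hLf f) ?_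
    filter_upwards [hgt] with t ht
    refine setIntegral_nonneg hΩ.measurableSet fun x hx => mul_nonneg (ht.2 x hx) ?_
    by_cases hx : x ∈ R
    · have h1 := exval f ⟨x, hx⟩
      simp only at h1
      rw [h1]; exact hf _
    · rw [exout _ x hx]
  let Λ : C_c(R, ℝ) →ₚ[ℝ] ℝ := PositiveLinearMap.mk₀ Λ0 hpos
  let μ := RealRMK.rieszMeasure Λ
  have hemb : MeasurableEmbedding (Subtype.val : R → Euc N) :=
    MeasurableEmbedding.subtype_coe hR.measurableSet
  refine ⟨μ.map Subtype.val, ⟨?_, ?_⟩, ?_⟩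
  · rw [hemb.map_apply]; simp
  · intro K hKR hK
    rw [hemb.map_apply]
    have : IsCompact (Subtype.val ⁻¹' K : Set R) :=
      Topology.IsInducing.subtypeVal.isCompact_preimage' hK (by simpa using hKR)
    exact this.measure_lt_top
  · intro φ hφ hφc hφs
    let f : C_c(R, ℝ) := ⟨⟨fun x => φ x, by fun_prop⟩, by
      refine HasCompactSupport.of_support_subset_isCompact
        (K := Subtype.val ⁻¹' tsupport φ) ?_ ?_
      · exact Topology.IsInducing.subtypeVal.isCompact_preimage' hφc.isCompact (by simpa using hφs)
      · intro x hx
        exact subset_tsupport φ hx⟩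
    have hexf : ex f = φ := by
      funext x
      by_cases hx : x ∈ R
      · exact exval f ⟨x, hx⟩
      · rw [exout _ x hx, image_eq_zero_of_notMem_tsupport fun h => hx (hφs h)]
    have h1 := hLf f
    rw [hexf] at h1
    have h2 : ∫ x, φ x ∂(μ.map Subtype.val) = Lf f := by
      rw [hemb.integral_map]
      exact RealRMK.integral_rieszMeasure Λ f
    rw [h2]
    exact h1
end

/-- **Proposition 2.8.** A nonnegative `L¹` subsolution of
`∂_t u − Δu + g(u) = 0` in `Q_T` with `g∘u ∈ L¹(Q_T)` admits as initial trace a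
positive outer regular Borel measure, i.e. a pair `(S, ν)` with `S ⊆ Ω`
relatively closed in `Ω` and `ν` a positive Radon measure on `R = Ω ∖ S`. -/
theorem stmt_3 {N : ℕ} (hN : 1 ≤ N) (Ω : Set (Euc N)) (hΩo : IsOpen Ω)
    (hΩc : IsConnected Ω) (hΩb : Bornology.IsBounded Ω) (T : ℝ) (hT : 0 < T)
    (g : ℝ → ℝ) (hg : GoodG g) (u : Euc N × ℝ → ℝ)
    (hu_int : IntegrableOn u (QT Ω T))
    (hu_nonneg : ∀ p ∈ QT Ω T, 0 ≤ u p)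
    (hgu_int : IntegrableOn (fun p => g (u p)) (QT Ω T))
    (hsub : ∀ ζ : Euc N → ℝ → ℝ, C21 ζ →
      HasCompactSupport (fun p : Euc N × ℝ => ζ p.1 p.2) →
      tsupport (fun p : Euc N × ℝ => ζ p.1 p.2) ⊆ QT Ω T →
      (∀ x t, 0 ≤ ζ x t) →
      (∫ p in QT Ω T,
        (-(u p) * deriv (ζ p.1) p.2 - u p * lap (fun y => ζ y p.2) p.1 + ζ p.1 p.2 * g (u p)))
        ≤ 0) :
    ∃ S : Set (Euc N), S ⊆ Ω ∧ IsOpen (Ω \ S) ∧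
      ∃ ν : Measure (Euc N), RadonOn (Ω \ S) ν ∧ InitTraceOn Ω (Ω \ S) u ν ∧
        ∀ φ : Euc N → ℝ, Continuous φ → HasCompactSupport φ → tsupport φ ⊆ Ω →
          (∀ x, 0 ≤ φ x) → (∃ x ∈ S, 0 < φ x) →
          EssLimInitTop (fun t => ∫ x in Ω, u (x, t) * φ x) := by
  have hgt := goodT_ev hT hu_int hu_nonneg
  have hd : ∀ ψ, Adm Ω ψ → (∃ L, Tendsto (FF Ω u ψ) ll (𝓝 L)) ∨
      Tendsto (FF Ω u ψ) ll atTop := fun ψ h =>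
    dich Ω T hT hΩo g hg u hu_int hgu_int hsub ψ h.1 h.2.1 h.2.2.1 h.2.2.2
  have hRΩ : Reg Ω u ⊆ Ω := fun x hx => hx.1
  have hR : Ω \ (Ω \ Reg Ω u) = Reg Ω u := by
    rw [sdiff_sdiff_right_self]; exact inter_eq_right.2 hRΩ
  refine ⟨Ω \ Reg Ω u, sdiff_subset, ?_, ?_⟩
  · rw [hR]; exact Reg_open hΩo
  rw [hR]
  obtain ⟨ν, h1, h2⟩ := riesz_part hΩo hgt (Reg Ω u) (Reg_open hΩo)
    (fun φ hφ hs => lim_exists hΩo hgt hd hφ hs)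
  refine ⟨ν, h1, h2, ?_⟩
  rintro φ hφ hφc hφs hφ0 ⟨x, ⟨hxΩ, hxR⟩, hx0⟩
  have hnb : {y | φ x / 2 < φ y} ∈ 𝓝 x :=
    hφ.continuousAt.eventually_const_lt (by linarith)
  obtain ⟨b, hb1, hb2, hb3, hb4, hb5⟩ := exists_contDiff_tsupport_subset (n := ⊤) hnb
  have hb4' : ∀ y, 0 ≤ b y ∧ b y ≤ 1 := fun y => hb4 ⟨y, rfl⟩
  have hbΩ : tsupport b ⊆ Ω := by
    intro y hy
    have h' : φ x / 2 < φ y := hb1 hy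
    exact hφs (subset_tsupport _ (show φ y ≠ 0 by linarith))
  have hbA : Adm Ω b := ⟨hb3, hb2, hbΩ, fun y => (hb4' y).1⟩
  have hψA := hbA.smul (c := φ x / 2) (by positivity)
  have hψφ : ∀ y, φ x / 2 * b y ≤ φ y := by
    intro y
    by_cases hy : y ∈ tsupport b
    · have h' : φ x / 2 < φ y := hb1 hy
      nlinarith [hb4' y]
    · rw [image_eq_zero_of_notMem_tsupport hy]; simpa using hφ0 y
  rcases hd _ hψA with ⟨L, hL⟩ | htop
  · exfalso
    apply hxR
    refine ⟨hxΩ, _, hψA, by rw [hb5]; linarith, L + 1, ?_⟩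
    exact (hL.eventually_lt_const (by linarith : L < L + 1)).mono fun t h => h.le
  · refine tendsto_atTop_mono' _ ?_ htop
    filter_upwards [hgt] with t ht
    exact ht.mono hΩo hψA.cc ⟨hφ, hφc⟩ hψφ
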